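/- If a and b are linear recurrent sequences over a field K whose characteristic polynomials split with roots α_1,...,α_M and β_1,...,β_N, then the Newton product a ⊠ b is a linear recurrent sequence with characteristic polynomial Π_{i=1}^M Π_{j=1}^N (t - (α_i + β_j + α_i β_j)). -/

import Mathlib

open Finset Polynomial

def newton {K : Type*} [Field K] (a b : ℕ → K) : ℕ → K :=
  fun n => ∑ i ∈ Finset.range (n + 1), ∑ j ∈ Finset.range (i + 1),
    (n.choose i : K) * (i.choose j : K) * a i * b (n - j)

def SatisfiesRec {K : Type*} [Field K] (a : ℕ → K) (p : Polynomial K) : Prop :=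
  ∀ n, ∑ i ∈ Finset.range (p.natDegree + 1), p.coeff i * a (n + i) = 0

/-!
Over a field, `a` recurs with characteristic polynomial `p` exactly when `a n = L (x ^ n)` for some
root `x` of `p` in a `K`-algebra `A` and some linear functional `L` on `A`. If also
`b n = L' (y ^ n)` with `y` a root of `q` in `B`, the binomial theorem gives
`(a ⊠ b) n = (L ⊗ L') (z ^ n)` with `z = x + y + x * y` in `A ⊗ B`. Finally `z` is a root of the
product over all `i, j`, because modulo `x - α i` the factors indexed by `i` multiply to a multiple
of `∏ j, (y - β j) = 0`; hence the whole product is a multiple of `∏ i, (x - α i) = 0`.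
-/

open scoped TensorProduct

section RootsOfProduct

variable {ι κ R A : Type*} [CommRing R] [CommRing A] [Algebra R A]

theorem sub_dvd_prod_of_prod_sub_eq_zero {t : Finset κ} {β : κ → A} {y : A}
    (hy : ∏ j ∈ t, (y - β j) = 0) (x α : A) :
    x - α ∣ ∏ j ∈ t, (x + y + x * y - (α + β j + α * β j)) := by
  let F : A[X] := ∏ j ∈ t, (X + C y + X * C y - C (α + β j + α * β j))
  have eval_F (u : A) : F.eval u = ∏ j ∈ t, (u + y + u * y - (α + β j + α * β j)) := by
    simp only [F, eval_prod, eval_sub, eval_add, eval_mul, eval_X, eval_C]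
  have eval_F_α : F.eval α = 0 := calc
    F.eval α = ∏ j ∈ t, (1 + α) * (y - β j) := by
      rw [eval_F]
      exact prod_congr rfl fun j _ => by ring
    _ = 0 := by rw [prod_mul_distrib, hy, mul_zero]
  simpa only [eval_F_α, sub_zero, eval_F] using sub_dvd_eval_sub x α F

theorem aeval_prod_prod_eq_zero {s : Finset ι} {t : Finset κ} {α : ι → R} {β : κ → R} {x y : A}
    (hx : aeval x (∏ i ∈ s, (X - C (α i))) = 0) (hy : aeval y (∏ j ∈ t, (X - C (β j))) = 0) :
    aeval (x + y + x * y) (∏ i ∈ s, ∏ j ∈ t, (X - C (α i + β j + α i * β j))) = 0 := by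
  simp only [map_prod, map_sub, map_add, map_mul, aeval_X, aeval_C] at hx hy ⊢
  exact zero_dvd_iff.mp <| hx ▸ prod_dvd_prod_of_dvd _ _ fun i _ =>
    sub_dvd_prod_of_prod_sub_eq_zero hy x (algebraMap R A (α i))

end RootsOfProduct

section TensorProduct

variable {R A B : Type*} [CommSemiring R] [Semiring A] [Algebra R A] [Semiring B] [Algebra R B]

theorem aeval_tmul_one (x : A) (p : R[X]) :
    aeval (x ⊗ₜ[R] (1 : B)) p = aeval x p ⊗ₜ 1 :=
  aeval_algHom_apply (Algebra.TensorProduct.includeLeft : A →ₐ[R] A ⊗[R] B) x p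

theorem aeval_one_tmul (y : B) (p : R[X]) :
    aeval ((1 : A) ⊗ₜ[R] y) p = 1 ⊗ₜ aeval y p :=
  aeval_algHom_apply (Algebra.TensorProduct.includeRight : B →ₐ[R] A ⊗[R] B) y p

end TensorProduct

theorem add_add_mul_pow {R : Type*} [CommSemiring R] (x y : R) (n : ℕ) :
    (x + y + x * y) ^ n = ∑ i ∈ range (n + 1), ∑ j ∈ range (i + 1),
      (n.choose i : R) * (i.choose j : R) * x ^ i * y ^ (n - j) := by
  have factor : x + y + x * y = x * (1 + y) + y := by ring
  rw [factor, add_pow]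
  refine sum_congr rfl fun i hi => ?_
  rw [mul_pow, add_pow, mul_sum, sum_mul, sum_mul]
  refine sum_congr rfl fun j hj => ?_
  have exponent : n - j = (i - j) + (n - i) := by
    have := mem_range.mp hi
    have := mem_range.mp hj
    omega
  rw [exponent, pow_add, one_pow]
  ring

theorem linearMap_pow_mul_aeval {R A : Type*} [CommSemiring R] [Semiring A] [Algebra R A]
    (L : A →ₗ[R] R) (x : A) (n : ℕ) (p : R[X]) :
    L (x ^ n * aeval x p) = ∑ i ∈ range (p.natDegree + 1), p.coeff i * L (x ^ (n + i)) := by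
  simp only [aeval_eq_sum_range, mul_sum, map_sum, mul_smul_comm, map_smul, smul_eq_mul, pow_add]

section LinearRecurrence

variable {K : Type*} [Field K]

theorem satisfiesRec_of_aeval_eq_zero {A : Type*} [Semiring A] [Algebra K A]
    (L : A →ₗ[K] K) {x : A} {p : K[X]} (hx : aeval x p = 0) :
    SatisfiesRec (fun n => L (x ^ n)) p := fun n => by
  rw [← linearMap_pow_mul_aeval, hx, mul_zero, map_zero]

theorem SatisfiesRec.linearMap_mul_eq_zero {p : K[X]} {φ : K[X] →ₗ[K] K}
    (h : SatisfiesRec (fun n => φ (X ^ n)) p) (f : K[X]) : φ (f * p) = 0 := by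
  induction f using Polynomial.induction_on' with
  | add f g hf hg => rw [add_mul, map_add, hf, hg, add_zero]
  | monomial n c =>
    have φ_X_pow_mul : φ (X ^ n * p) = 0 := by
      simpa only [aeval_X_left_apply, h n] using linearMap_pow_mul_aeval φ X n p
    rw [← smul_X_eq_monomial, smul_mul_assoc, map_smul, φ_X_pow_mul, smul_zero]

theorem SatisfiesRec.exists_linearMap_root_pow {a : ℕ → K} {p : K[X]} (ha : SatisfiesRec a p) :
    ∃ L : AdjoinRoot p →ₗ[K] K, (fun n => L (AdjoinRoot.root p ^ n)) = a := by
  let φ : K[X] →ₗ[K] K := (basisMonomials K).constr K a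
  have φ_X_pow : (fun n => φ (X ^ n)) = a := by
    funext n
    simpa only [coe_basisMonomials, X_pow_eq_monomial] using (basisMonomials K).constr_basis K a n
  let π : K[X] →ₗ[K] AdjoinRoot p := (AdjoinRoot.mkₐ p).toLinearMap
  have φ_mem_range : φ ∈ π.dualMap.range := by
    rw [LinearMap.range_dualMap_eq_dualAnnihilator_ker, Submodule.mem_dualAnnihilator]
    intro f hf
    obtain ⟨g, rfl⟩ := AdjoinRoot.mk_eq_zero.mp hf
    rw [mul_comm]
    exact SatisfiesRec.linearMap_mul_eq_zero (φ_X_pow ▸ ha) g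
  obtain ⟨L, hL⟩ := φ_mem_range
  refine ⟨L, ?_⟩
  simp only [← φ_X_pow, ← hL, π, LinearMap.dualMap_apply, AlgHom.toLinearMap_apply, map_pow,
    AdjoinRoot.coe_mkₐ, AdjoinRoot.mk_X]

theorem newton_linearMap_pow {A B : Type*} [CommSemiring A] [Algebra K A] [CommSemiring B]
    [Algebra K B] (L : A →ₗ[K] K) (L' : B →ₗ[K] K) (x : A) (y : B) :
    newton (fun n => L (x ^ n)) (fun n => L' (y ^ n)) = fun n =>
      TensorProduct.dualDistrib K A B (L ⊗ₜ L') ((x ⊗ₜ 1 + 1 ⊗ₜ y + x ⊗ₜ 1 * 1 ⊗ₜ y) ^ n) := by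
  funext n
  have pow_mul_pow (i k : ℕ) :
      (x ⊗ₜ[K] (1 : B)) ^ i * ((1 : A) ⊗ₜ[K] y) ^ k = (x ^ i) ⊗ₜ (y ^ k) := by
    simp only [Algebra.TensorProduct.tmul_pow, one_pow, Algebra.TensorProduct.tmul_mul_tmul,
      mul_one, one_mul]
  simp only [newton, add_add_mul_pow, mul_assoc, pow_mul_pow, map_sum]
  simp only [← nsmul_eq_mul, map_nsmul, TensorProduct.dualDistrib_apply]

end LinearRecurrence

/-- If `a` and `b` recur with characteristic polynomials splitting with roots
`α_i` and `β_j`, then `a ⊠ b` recurs with characteristic polynomial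
`∏_{i,j} (t - (α_i + β_j + α_i β_j))`. -/
theorem newton_linear_recurrent {K : Type*} [Field K] {M N : ℕ} (hM : 0 < M) (hN : 0 < N)
    (a b : ℕ → K) (α : Fin M → K) (β : Fin N → K)
    (ha : SatisfiesRec a (∏ i, (X - C (α i))))
    (hb : SatisfiesRec b (∏ j, (X - C (β j)))) :
    SatisfiesRec (newton a b) (∏ i, ∏ j, (X - C (α i + β j + α i * β j))) := by
  obtain ⟨L, hL⟩ := ha.exists_linearMap_root_pow
  obtain ⟨L', hL'⟩ := hb.exists_linearMap_root_pow
  set p : K[X] := ∏ i, (X - C (α i))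
  set q : K[X] := ∏ j, (X - C (β j))
  have root_left : aeval (AdjoinRoot.root p ⊗ₜ[K] (1 : AdjoinRoot q)) p = 0 := by
    rw [aeval_tmul_one, AdjoinRoot.aeval_eq, AdjoinRoot.mk_self, TensorProduct.zero_tmul]
  have root_right : aeval ((1 : AdjoinRoot p) ⊗ₜ[K] AdjoinRoot.root q) q = 0 := by
    rw [aeval_one_tmul, AdjoinRoot.aeval_eq, AdjoinRoot.mk_self, TensorProduct.tmul_zero]
  rw [← hL, ← hL', newton_linearMap_pow]
  exact satisfiesRec_of_aeval_eq_zero _ (aeval_prod_prod_eq_zero root_left root_right)
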